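/- The ten functions D_δ (δ ranging over the ten even characteristics) are linearly independent over ℂ; equivalently, the ℂ-linear span of {D_δ₁, …, D_δ₁₀} has dimension exactly 10. -/

import Mathlib

open scoped BigOperators

namespace TwoLoop

/-- 2×2 complex matrices. -/
abbrev Mat2 := Matrix (Fin 2) (Fin 2) ℂ

/-- The genus-2 Siegel upper half space: symmetric 2×2 complex matrices with
positive definite imaginary part. -/
def SiegelH2 : Set Mat2 := {τ | τ.transpose = τ ∧ (τ.map Complex.im).PosDef}

/-- A (half-integer) theta characteristic `[a;b]`, recorded by its rows `a, b ∈ {0,1}²`. -/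
abbrev Char := (Fin 2 → ℤ) × (Fin 2 → ℤ)

/-- The theta constant `θ[a;b](τ) = Σ_{n ∈ ℤ²} exp(πi (n+a/2)ᵀ τ (n+a/2) + πi (n+a/2)·b)`. -/
noncomputable def theta (κ : Char) (τ : Mat2) : ℂ :=
  ∑' n : Fin 2 → ℤ,
    Complex.exp ((Real.pi : ℂ) * Complex.I *
      ((∑ i, ∑ j, ((n i : ℂ) + (κ.1 i : ℂ) / 2) * τ i j * ((n j : ℂ) + (κ.1 j : ℂ) / 2))
        + ∑ i, ((n i : ℂ) + (κ.1 i : ℂ) / 2) * (κ.2 i : ℂ)))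

/-- The ten even characteristics δ₁,…,δ₁₀. -/
def δev : Fin 10 → Char :=
  ![(![0,0], ![0,0]), (![0,0], ![0,1]), (![0,0], ![1,0]), (![0,0], ![1,1]),
    (![0,1], ![0,0]), (![0,1], ![1,0]), (![1,0], ![0,0]), (![1,0], ![0,1]),
    (![1,1], ![0,0]), (![1,1], ![1,1])]

/-- The six odd characteristics ν₁,…,ν₆. -/
def νodd : Fin 6 → Char :=
  ![(![0,1], ![0,1]), (![1,0], ![1,0]), (![0,1], ![1,1]),
    (![1,0], ![1,1]), (![1,1], ![0,1]), (![1,1], ![1,0])]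

/-- `Θ[ε](τ) = θ[ε;0](2τ)`. -/
noncomputable def Θf (ε : Fin 2 → ℤ) (τ : Mat2) : ℂ := theta (ε, ![0,0]) ((2 : ℂ) • τ)

noncomputable def P0 (τ : Mat2) : ℂ :=
  Θf ![0,0] τ ^ 4 + Θf ![0,1] τ ^ 4 + Θf ![1,0] τ ^ 4 + Θf ![1,1] τ ^ 4
noncomputable def P1 (τ : Mat2) : ℂ :=
  2 * (Θf ![0,0] τ ^ 2 * Θf ![0,1] τ ^ 2 + Θf ![1,0] τ ^ 2 * Θf ![1,1] τ ^ 2)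
noncomputable def P2 (τ : Mat2) : ℂ :=
  2 * (Θf ![0,0] τ ^ 2 * Θf ![1,0] τ ^ 2 + Θf ![0,1] τ ^ 2 * Θf ![1,1] τ ^ 2)
noncomputable def P3 (τ : Mat2) : ℂ :=
  2 * (Θf ![0,0] τ ^ 2 * Θf ![1,1] τ ^ 2 + Θf ![0,1] τ ^ 2 * Θf ![1,0] τ ^ 2)
noncomputable def P4 (τ : Mat2) : ℂ :=
  4 * (Θf ![0,0] τ * Θf ![0,1] τ * Θf ![1,0] τ * Θf ![1,1] τ)

/-- The vector `(P₀,…,P₄)`. -/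
noncomputable def Pv : Fin 5 → Mat2 → ℂ := ![P0, P1, P2, P3, P4]

open MvPolynomial in
/-- The Igusa quartic as a polynomial in `x₀,…,x₄`. -/
noncomputable def I4poly : MvPolynomial (Fin 5) ℂ :=
  X 4 ^ 4 + X 4 ^ 2 * X 0 ^ 2 - X 4 ^ 2 * X 1 ^ 2 - X 4 ^ 2 * X 2 ^ 2 - X 4 ^ 2 * X 3 ^ 2
    + X 1 ^ 2 * X 2 ^ 2 + X 1 ^ 2 * X 3 ^ 2 + X 2 ^ 2 * X 3 ^ 2
    - 2 * (X 0 * X 1 * X 2 * X 3)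

/-- The signature `⟨κ|λ⟩ = exp(πi(a_κ·b_λ − b_κ·a_λ))`. -/
noncomputable def sig (κ lam : Char) : ℂ :=
  Complex.exp ((Real.pi : ℂ) * Complex.I *
    (((∑ i, κ.1 i * lam.2 i : ℤ) : ℂ) - ((∑ i, κ.2 i * lam.1 i : ℤ) : ℂ)))

/-- Componentwise mod-2 sum of characteristics. -/
def addChar (κ lam : Char) : Char :=
  (fun i => (κ.1 i + lam.1 i) % 2, fun i => (κ.2 i + lam.2 i) % 2)

/-- For each even characteristic `δ_d`, the ordering `(k₁,…,k₆)` of `{1,…,6}` (0-indexed) whose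
first three entries form the triad of odd characteristics with `δ_d = ν_{k₁}+ν_{k₂}+ν_{k₃}`
and whose last three are the complementary indices. -/
def triad : Fin 10 → Fin 6 → Fin 6 :=
  ![![0,3,5,1,2,4], ![0,1,5,2,3,4], ![0,1,4,2,3,5], ![0,3,4,1,2,5], ![0,1,3,2,4,5],
    ![0,4,5,1,2,3], ![0,1,2,3,4,5], ![0,2,3,1,4,5], ![0,2,5,1,3,4], ![0,2,4,1,3,5]]

/-- D'Hoker–Phong's `Ξ₆[δ]`. -/
noncomputable def Xi6 (d : Fin 10) (τ : Mat2) : ℂ :=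
  ∑ i : Fin 3, ∑ j : Fin 3,
    if i < j then
      sig (νodd (triad d (Fin.castLE (by norm_num) i))) (νodd (triad d (Fin.castLE (by norm_num) j))) *
        ∏ m : Fin 3,
          theta (addChar (addChar (νodd (triad d (Fin.castLE (by norm_num) i)))
              (νodd (triad d (Fin.castLE (by norm_num) j))))
            (νodd (triad d (⟨m.1 + 3, by omega⟩ : Fin 6)))) τ ^ 4
    else 0

/-- The formal derivative `∂I₄/∂θ⁴[δ]` of the Igusa quartic with respect to the ten fourth
powers of the even theta constants, regarded as independent variables. -/
noncomputable def Dd (d : Fin 10) (τ : Mat2) : ℂ :=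
  (1 / 48 : ℂ) *
    (theta (δev d) τ ^ 4 * (∑ d' : Fin 10, theta (δev d') τ ^ 8) - 4 * theta (δev d) τ ^ 12)

/-- `f_δ = 2Ξ₆[δ] − ∂I₄/∂θ⁴[δ]`. -/
noncomputable def fδ (d : Fin 10) (τ : Mat2) : ℂ := 2 * Xi6 d τ - Dd d τ

/-- `Ψ₆`, the weight-6 modular form. -/
noncomputable def Ψ6 (τ : Mat2) : ℂ :=
  P0 τ ^ 3 - 9 * P0 τ * (P1 τ ^ 2 + P2 τ ^ 2 + P3 τ ^ 2 - 4 * P4 τ ^ 2)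
    + 54 * (P1 τ * P2 τ * P3 τ)

/-- `Ψ₁₀`, the weight-10 modular form. -/
noncomputable def Ψ10 (τ : Mat2) : ℂ := ∏ d : Fin 10, theta (δev d) τ ^ 2

/-- A characteristic is even when `a·b` is even. -/
def IsEvenChar (κ : Char) : Prop := (∑ i, κ.1 i * κ.2 i) % 2 = 0

/-- A characteristic is odd when `a·b` is odd. -/
def IsOddChar (κ : Char) : Prop := (∑ i, κ.1 i * κ.2 i) % 2 = 1


/-- A three-real-parameter family of period matrices. -/
noncomputable def fam (y1 y2 c : ℝ) : Mat2 := !![Complex.I * y1, (c:ℂ); (c:ℂ), Complex.I * y2]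

lemma fam_mem {y1 y2 : ℝ} (c : ℝ) (h1 : 0 < y1) (h2 : 0 < y2) : fam y1 y2 c ∈ SiegelH2 := by
  constructor
  · ext i j
    fin_cases i <;> fin_cases j <;> simp [fam]
  · have : (fam y1 y2 c).map Complex.im = Matrix.diagonal ![y1, y2] := by
      ext i j
      fin_cases i <;> fin_cases j <;> simp [fam]
    rw [this]
    refine Matrix.PosDef.diagonal ?_
    intro i
    fin_cases i <;> simp [h1, h2]

/-- General term of the theta series on the family. -/
noncomputable def tm (y1 y2 c : ℝ) (a0 a1 b0 b1 : ℤ) (n : Fin 2 → ℤ) : ℂ :=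
  Complex.exp ((Real.pi : ℂ) * Complex.I *
    (Complex.I * y1 * ((n 0 : ℂ) + a0 / 2) ^ 2 +
      2 * c * ((n 0 : ℂ) + a0 / 2) * ((n 1 : ℂ) + a1 / 2) +
      Complex.I * y2 * ((n 1 : ℂ) + a1 / 2) ^ 2 +
      ((n 0 : ℂ) + a0 / 2) * b0 + ((n 1 : ℂ) + a1 / 2) * b1))

lemma theta_fam (y1 y2 c : ℝ) (a0 a1 b0 b1 : ℤ) :
    theta (![a0, a1], ![b0, b1]) (fam y1 y2 c) = ∑' n, tm y1 y2 c a0 a1 b0 b1 n := by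
  unfold theta tm
  congr 1
  ext n
  congr 2
  simp [Fin.sum_univ_two, fam]
  ring

lemma norm_tm (y1 y2 c : ℝ) (a0 a1 b0 b1 : ℤ) (n : Fin 2 → ℤ) :
    ‖tm y1 y2 c a0 a1 b0 b1 n‖ =
      Real.exp (-Real.pi * y1 * ((n 0 : ℝ) + a0 / 2) ^ 2) *
      Real.exp (-Real.pi * y2 * ((n 1 : ℝ) + a1 / 2) ^ 2) := by
  rw [tm, Complex.norm_exp, ← Real.exp_add]
  congr 1
  have : ((Real.pi : ℂ) * Complex.I *
    (Complex.I * y1 * ((n 0 : ℂ) + a0 / 2) ^ 2 +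
      2 * c * ((n 0 : ℂ) + a0 / 2) * ((n 1 : ℂ) + a1 / 2) +
      Complex.I * y2 * ((n 1 : ℂ) + a1 / 2) ^ 2 +
      ((n 0 : ℂ) + a0 / 2) * b0 + ((n 1 : ℂ) + a1 / 2) * b1)) =
     ((-Real.pi * y1 * ((n 0 : ℝ) + a0 / 2) ^ 2 + -Real.pi * y2 * ((n 1 : ℝ) + a1 / 2) ^ 2 : ℝ) : ℂ)
     + ((Real.pi * (2 * c * ((n 0 : ℝ) + a0 / 2) * ((n 1 : ℝ) + a1 / 2) +
      ((n 0 : ℝ) + a0 / 2) * b0 + ((n 1 : ℝ) + a1 / 2) * b1) : ℝ) : ℂ) * Complex.I := by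
    push_cast
    linear_combination (Real.pi * (y1 * ((n 0 : ℂ) + a0 / 2) ^ 2 + y2 * ((n 1 : ℂ) + a1 / 2) ^ 2)) * Complex.I_sq
  rw [this, Complex.add_re, Complex.re_ofReal_mul, Complex.ofReal_re]
  simp

lemma summable_one {y : ℝ} (hy : 0 < y) (a : ℤ) :
    Summable (fun n : ℤ => Real.exp (-Real.pi * y * ((n : ℝ) + a / 2) ^ 2)) := by
  have h := ((summable_jacobiTheta₂_term_iff (Complex.I * ((y * a / 2 : ℝ) : ℂ)) (Complex.I * y)).2
    (by simpa using hy)).norm.mul_right (Real.exp (-Real.pi * y * (a / 2) ^ 2))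
  refine h.congr (fun n => ?_)
  rw [norm_jacobiTheta₂_term, ← Real.exp_add]
  congr 1
  simp only [Complex.mul_im, Complex.I_re, Complex.I_im, Complex.ofReal_re, Complex.ofReal_im]
  ring

lemma summable_two {f g : ℤ → ℝ} (hf : Summable f) (hg : Summable g) (hf0 : ∀ n, 0 ≤ f n)
    (hg0 : ∀ n, 0 ≤ g n) : Summable (fun n : Fin 2 → ℤ => f (n 0) * g (n 1)) := by
  have h := hf.mul_of_nonneg hg hf0 hg0
  exact (finTwoArrowEquiv ℤ).summable_iff.2 h

lemma summable_tm {y1 y2 : ℝ} (c : ℝ) (h1 : 0 < y1) (h2 : 0 < y2) (a0 a1 b0 b1 : ℤ) :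
    Summable (fun n => ‖tm y1 y2 c a0 a1 b0 b1 n‖) := by
  simp_rw [norm_tm]
  exact summable_two (summable_one h1 a0) (summable_one h2 a1) (fun _ => (Real.exp_pos _).le)
    (fun _ => (Real.exp_pos _).le)

/-- The second-order theta constants on the family. -/
noncomputable def Th (y1 y2 c : ℝ) (e0 e1 : ℤ) : ℂ := ∑' n, tm (2 * y1) (2 * y2) (2 * c) e0 e1 0 0 n

/-- Reindexing map of the addition theorem. -/
def phi (x : (Fin 2 → Fin 2) × ((Fin 2 → ℤ) × (Fin 2 → ℤ))) : (Fin 2 → ℤ) × (Fin 2 → ℤ) :=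
  (fun i => x.2.1 i + x.2.2 i + ((x.1 i : ℕ) : ℤ), fun i => x.2.1 i - x.2.2 i)

lemma phi_bij : Function.Bijective phi := by
  constructor
  · rintro ⟨e, k, l⟩ ⟨e', k', l'⟩ h
    simp only [phi, Prod.mk.injEq, funext_iff] at h
    obtain ⟨h1, h2⟩ := h
    have key : ∀ i, e i = e' i ∧ k i = k' i ∧ l i = l' i := by
      intro i
      have := h1 i
      have := h2 i
      have := (e i).isLt
      have := (e' i).isLt
      refine ⟨Fin.ext ?_, ?_, ?_⟩ <;> omega
    simp only [Prod.mk.injEq, funext_iff]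
    exact ⟨fun i => (key i).1, fun i => (key i).2.1, fun i => (key i).2.2⟩
  · rintro ⟨n, m⟩
    refine ⟨(fun i => ⟨((n i - m i) % 2).toNat, by omega⟩, fun i => m i + (n i - m i) / 2,
      fun i => (n i - m i) / 2), ?_⟩
    simp only [phi, Prod.mk.injEq, funext_iff]
    exact ⟨fun i => by omega, fun i => by omega⟩

lemma exp_int (k : ℤ) : Complex.exp (2 * Real.pi * Complex.I * k) = 1 := by
  rw [mul_comm]; exact Complex.exp_int_mul_two_pi_mul_I k

lemma tm_mul (y1 y2 c : ℝ) (a0 a1 b0 b1 : ℤ) (e : Fin 2 → Fin 2) (k l : Fin 2 → ℤ) :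
    tm y1 y2 c a0 a1 b0 b1 (phi (e, k, l)).1 * tm y1 y2 c a0 a1 b0 b1 (phi (e, k, l)).2 =
    Complex.exp (Real.pi * Complex.I * ((a0 + ((e 0 : ℕ) : ℤ)) * b0 + (a1 + ((e 1 : ℕ) : ℤ)) * b1)) *
    (tm (2 * y1) (2 * y2) (2 * c) (a0 + ((e 0 : ℕ) : ℤ)) (a1 + ((e 1 : ℕ) : ℤ)) 0 0 k *
      tm (2 * y1) (2 * y2) (2 * c) ((e 0 : ℕ) : ℤ) ((e 1 : ℕ) : ℤ) 0 0 l) := by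
  have h := exp_int (k 0 * b0 + k 1 * b1)
  rw [← mul_one (Complex.exp (Real.pi * Complex.I * _)), ← h]
  simp only [tm, phi, ← Complex.exp_add]
  congr 1
  push_cast
  ring

lemma theta_sq {y1 y2 : ℝ} (c : ℝ) (h1 : 0 < y1) (h2 : 0 < y2) (a0 a1 b0 b1 : ℤ) :
    theta (![a0, a1], ![b0, b1]) (fam y1 y2 c) ^ 2 =
    ∑ e : Fin 2 → Fin 2, Complex.exp (Real.pi * Complex.I *
        ((a0 + ((e 0 : ℕ) : ℤ)) * b0 + (a1 + ((e 1 : ℕ) : ℤ)) * b1)) *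
      (Th y1 y2 c (a0 + ((e 0 : ℕ) : ℤ)) (a1 + ((e 1 : ℕ) : ℤ)) *
        Th y1 y2 c ((e 0 : ℕ) : ℤ) ((e 1 : ℕ) : ℤ)) := by
  have hs := summable_tm c h1 h2 a0 a1 b0 b1
  have hS := summable_mul_of_summable_norm hs hs
  have hs' := summable_tm (2 * c) (mul_pos two_pos h1) (mul_pos two_pos h2)
  rw [theta_fam, sq, tsum_mul_tsum_of_summable_norm hs hs]
  let E := Equiv.ofBijective phi phi_bij
  rw [← E.tsum_eq]
  have hS' := E.summable_iff.2 hS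
  simp only [Function.comp_def] at hS'
  rw [hS'.tsum_prod, tsum_fintype]
  refine Finset.sum_congr rfl (fun e _ => ?_)
  rw [Th, Th, tsum_mul_tsum_of_summable_norm (hs' _ _ _ _) (hs' _ _ _ _), ← tsum_mul_left]
  exact tsum_congr (fun x => tm_mul y1 y2 c a0 a1 b0 b1 e x.1 x.2)

lemma Th_shift0 (y1 y2 c : ℝ) (e0 e1 : ℤ) : Th y1 y2 c (e0 + 2) e1 = Th y1 y2 c e0 e1 := by
  unfold Th
  rw [← (Equiv.addRight (![1, 0] : Fin 2 → ℤ)).tsum_eq (tm (2 * y1) (2 * y2) (2 * c) e0 e1 0 0)]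
  refine tsum_congr (fun n => ?_)
  simp only [tm]
  congr 1
  simp
  ring

lemma Th_shift1 (y1 y2 c : ℝ) (e0 e1 : ℤ) : Th y1 y2 c e0 (e1 + 2) = Th y1 y2 c e0 e1 := by
  unfold Th
  rw [← (Equiv.addRight (![0, 1] : Fin 2 → ℤ)).tsum_eq (tm (2 * y1) (2 * y2) (2 * c) e0 e1 0 0)]
  refine tsum_congr (fun n => ?_)
  simp only [tm]
  congr 1
  simp
  ring

/-- The vector of second-order theta constants. -/
noncomputable def XX (y1 y2 c : ℝ) : Fin 4 → ℂ :=
  ![Th y1 y2 c 0 0, Th y1 y2 c 0 1, Th y1 y2 c 1 0, Th y1 y2 c 1 1]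

open MvPolynomial in
/-- Squares of theta constants as quadratic polynomials in second-order theta constants. -/
noncomputable def Tp : Fin 10 → MvPolynomial (Fin 4) ℂ :=
  ![X 0 * X 0 + X 1 * X 1 + X 2 * X 2 + X 3 * X 3,
    X 0 * X 0 - X 1 * X 1 + X 2 * X 2 - X 3 * X 3,
    X 0 * X 0 + X 1 * X 1 - X 2 * X 2 - X 3 * X 3,
    X 0 * X 0 - X 1 * X 1 - X 2 * X 2 + X 3 * X 3,
    C 2 * (X 0 * X 1 + X 2 * X 3), C 2 * (X 0 * X 1 - X 2 * X 3),
    C 2 * (X 0 * X 2 + X 1 * X 3), C 2 * (X 0 * X 2 - X 1 * X 3),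
    C 2 * (X 0 * X 3 + X 1 * X 2), C 2 * (X 0 * X 3 - X 1 * X 2)]

lemma exp_even (k : ℤ) : Complex.exp (Real.pi * Complex.I * ((2 * k : ℤ) : ℂ)) = 1 := by
  rw [← exp_int k]; congr 1; push_cast; ring

lemma exp_odd (k : ℤ) : Complex.exp (Real.pi * Complex.I * ((2 * k + 1 : ℤ) : ℂ)) = -1 := by
  have : (Real.pi * Complex.I * ((2 * k + 1 : ℤ) : ℂ)) =
    Real.pi * Complex.I * ((2 * k : ℤ) : ℂ) + Real.pi * Complex.I := by push_cast; ring
  rw [this, Complex.exp_add, exp_even, Complex.exp_pi_mul_I]; simp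

lemma theta_sq' {y1 y2 : ℝ} (c : ℝ) (h1 : 0 < y1) (h2 : 0 < y2) (a0 a1 b0 b1 : ℤ) :
    theta (![a0, a1], ![b0, b1]) (fam y1 y2 c) ^ 2 =
      Complex.exp (Real.pi * Complex.I * ((a0 * b0 + a1 * b1 : ℤ) : ℂ)) *
        (Th y1 y2 c a0 a1 * Th y1 y2 c 0 0) +
      Complex.exp (Real.pi * Complex.I * ((a0 * b0 + (a1 + 1) * b1 : ℤ) : ℂ)) *
        (Th y1 y2 c a0 (a1 + 1) * Th y1 y2 c 0 1) +
      (Complex.exp (Real.pi * Complex.I * (((a0 + 1) * b0 + a1 * b1 : ℤ) : ℂ)) *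
        (Th y1 y2 c (a0 + 1) a1 * Th y1 y2 c 1 0) +
      Complex.exp (Real.pi * Complex.I * (((a0 + 1) * b0 + (a1 + 1) * b1 : ℤ) : ℂ)) *
        (Th y1 y2 c (a0 + 1) (a1 + 1) * Th y1 y2 c 1 1)) := by
  rw [theta_sq c h1 h2, ← (finTwoArrowEquiv (Fin 2)).symm.sum_comp, Fintype.sum_prod_type]
  simp [Fin.sum_univ_two, finTwoArrowEquiv]

lemma theta_sq_eval {y1 y2 : ℝ} (c : ℝ) (h1 : 0 < y1) (h2 : 0 < y2) (d : Fin 10) :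
    theta (δev d) (fam y1 y2 c) ^ 2 = MvPolynomial.eval (XX y1 y2 c) (Tp d) := by
  have e0 : Complex.exp (Real.pi * Complex.I * ((0 : ℤ) : ℂ)) = 1 := exp_even 0
  have e1 : Complex.exp (Real.pi * Complex.I * ((1 : ℤ) : ℂ)) = -1 := exp_odd 0
  have e2 : Complex.exp (Real.pi * Complex.I * ((2 : ℤ) : ℂ)) = 1 := exp_even 1
  have f2 : Complex.exp (Real.pi * Complex.I * 2) = 1 := by exact_mod_cast e2
  have e3 : Complex.exp (Real.pi * Complex.I * ((3 : ℤ) : ℂ)) = -1 := exp_odd 1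
  have f3 : Complex.exp (Real.pi * Complex.I * 3) = -1 := by exact_mod_cast e3
  have e4 : Complex.exp (Real.pi * Complex.I * ((4 : ℤ) : ℂ)) = 1 := exp_even 2
  have f4 : Complex.exp (Real.pi * Complex.I * 4) = 1 := by exact_mod_cast e4
  have s0 : ∀ e, Th y1 y2 c 2 e = Th y1 y2 c 0 e := fun e => Th_shift0 y1 y2 c 0 e
  have s1 : ∀ e, Th y1 y2 c e 2 = Th y1 y2 c e 0 := fun e => Th_shift1 y1 y2 c e 0
  fin_cases d <;> simp only [δev] <;>
    refine (theta_sq' c h1 h2 _ _ _ _).trans ?_ <;>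
    norm_num only [e0, e1, e2, e3, e4, s0, s1, Tp, XX] <;>
    simp [f2, f3, f4] <;> ring

/-- The polynomial `48 D_δ` in second-order theta constants. -/
noncomputable def Dp (d : Fin 10) : MvPolynomial (Fin 4) ℂ :=
  Tp d ^ 2 * (∑ d', Tp d' ^ 4) - MvPolynomial.C 4 * Tp d ^ 6

lemma Dd_eval {y1 y2 : ℝ} (c : ℝ) (h1 : 0 < y1) (h2 : 0 < y2) (d : Fin 10) :
    Dd d (fam y1 y2 c) = (1 / 48) * MvPolynomial.eval (XX y1 y2 c) (Dp d) := by
  simp only [Dp, Dd, map_sub, map_mul, map_pow, map_sum, ← theta_sq_eval c h1 h2, ← pow_mul,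
    MvPolynomial.eval_C]

lemma Tp_hom (d : Fin 10) : (Tp d).IsHomogeneous 2 := by
  have h : ∀ i j : Fin 4, (MvPolynomial.X i * MvPolynomial.X j : MvPolynomial (Fin 4) ℂ).IsHomogeneous 2 :=
    fun i j => (MvPolynomial.isHomogeneous_X ℂ i).mul (MvPolynomial.isHomogeneous_X ℂ j)
  fin_cases d
  · exact (((h 0 0).add (h 1 1)).add (h 2 2)).add (h 3 3)
  · exact (((h 0 0).sub (h 1 1)).add (h 2 2)).sub (h 3 3)
  · exact (((h 0 0).add (h 1 1)).sub (h 2 2)).sub (h 3 3)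
  · exact (((h 0 0).sub (h 1 1)).sub (h 2 2)).add (h 3 3)
  · exact ((h 0 1).add (h 2 3)).C_mul 2
  · exact ((h 0 1).sub (h 2 3)).C_mul 2
  · exact ((h 0 2).add (h 1 3)).C_mul 2
  · exact ((h 0 2).sub (h 1 3)).C_mul 2
  · exact ((h 0 3).add (h 1 2)).C_mul 2
  · exact ((h 0 3).sub (h 1 2)).C_mul 2

lemma Dp_hom (d : Fin 10) : (Dp d).IsHomogeneous 12 := by
  refine MvPolynomial.IsHomogeneous.sub ?_ ?_
  · exact ((Tp_hom d).pow 2).mul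
      (MvPolynomial.IsHomogeneous.sum _ _ 8 (fun d' _ => (Tp_hom d').pow 4))
  · exact ((Tp_hom d).pow 6).C_mul 4

/-! ### Asymptotics -/

/-- Normalised exponent. -/
def gg (e n : ℤ) : ℤ := (2 * n + e) ^ 2 - e

lemma gg_nonneg {e : ℤ} (he : e = 0 ∨ e = 1) (n : ℤ) : 0 ≤ gg e n := by
  unfold gg
  rcases he with rfl | rfl
  · simp only [add_zero, sub_zero]
    positivity
  · rcases le_or_gt 0 n with h | h <;> nlinarith

/-- Normalised term. -/
noncomputable def nt (y1 y2 c : ℝ) (e0 e1 : ℤ) (n : Fin 2 → ℤ) : ℂ :=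
  ((Real.exp (-(Real.pi / 2) * (y1 * gg e0 (n 0) + y2 * gg e1 (n 1))) : ℝ) : ℂ) *
    Complex.exp (Real.pi * Complex.I * (c * (2 * n 0 + e0) * (2 * n 1 + e1)))

lemma tm_eq_nt (y1 y2 c : ℝ) (e0 e1 : ℤ) (n : Fin 2 → ℤ) :
    tm (2 * y1) (2 * y2) (2 * c) e0 e1 0 0 n =
      ((Real.exp (-(Real.pi / 2) * (y1 * e0 + y2 * e1)) : ℝ) : ℂ) * nt y1 y2 c e0 e1 n := by
  unfold tm nt gg
  push_cast
  rw [← Complex.exp_add, ← Complex.exp_add]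
  congr 1
  linear_combination (2 * Real.pi * (y1 * ((n 0 : ℂ) + e0 / 2) ^ 2 + y2 * ((n 1 : ℂ) + e1 / 2) ^ 2)) * Complex.I_sq

/-- Normalised second-order theta constant. -/
noncomputable def nT (y1 y2 c : ℝ) (e0 e1 : ℤ) : ℂ := ∑' n, nt y1 y2 c e0 e1 n

lemma Th_eq (y1 y2 c : ℝ) (e0 e1 : ℤ) : Th y1 y2 c e0 e1 =
    ((Real.exp (-(Real.pi / 2) * (y1 * e0 + y2 * e1)) : ℝ) : ℂ) * nT y1 y2 c e0 e1 := by
  unfold Th nT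
  simp_rw [tm_eq_nt]
  rw [tsum_mul_left]

lemma norm_nt (y1 y2 c : ℝ) (e0 e1 : ℤ) (n : Fin 2 → ℤ) : ‖nt y1 y2 c e0 e1 n‖ =
    Real.exp (-(Real.pi / 2) * (y1 * gg e0 (n 0) + y2 * gg e1 (n 1))) := by
  have : (Real.pi * Complex.I * (c * (2 * n 0 + e0) * (2 * n 1 + e1)) : ℂ) =
    ((Real.pi * (c * (2 * n 0 + e0) * (2 * n 1 + e1)) : ℝ) : ℂ) * Complex.I := by push_cast; ring
  rw [nt, norm_mul, this, Complex.norm_exp_ofReal_mul_I, mul_one, Complex.norm_real,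
    Real.norm_of_nonneg (Real.exp_pos _).le]

lemma summable_gg (e : ℤ) : Summable (fun n : ℤ => Real.exp (-(Real.pi / 2) * gg e n)) := by
  refine ((summable_one (y := 2) two_pos e).mul_right (Real.exp (Real.pi / 2 * e))).congr (fun n => ?_)
  rw [← Real.exp_add]
  congr 1
  unfold gg
  push_cast
  ring

/-- The limiting term. -/
noncomputable def lt (c : ℝ) (e0 e1 : ℤ) (n : Fin 2 → ℤ) : ℂ :=
  if gg e0 (n 0) = 0 ∧ gg e1 (n 1) = 0 then
    Complex.exp (Real.pi * Complex.I * (c * (2 * n 0 + e0) * (2 * n 1 + e1))) else 0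

open Filter Topology in
lemma nT_tendsto (c : ℝ) {N : ℕ} (hN : 1 ≤ N) {e0 e1 : ℤ} (h0 : e0 = 0 ∨ e0 = 1)
    (h1 : e1 = 0 ∨ e1 = 1) :
    Tendsto (fun s : ℝ => nT (N * s) s c e0 e1) atTop (𝓝 (∑' n, lt c e0 e1 n)) := by
  have hN' : (1 : ℝ) ≤ N := by exact_mod_cast hN
  unfold nT
  refine tendsto_tsum_of_dominated_convergence
    (bound := fun n => Real.exp (-(Real.pi / 2) * gg e0 (n 0)) * Real.exp (-(Real.pi / 2) * gg e1 (n 1)))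
    (summable_two (summable_gg e0) (summable_gg e1) (fun _ => (Real.exp_pos _).le)
      (fun _ => (Real.exp_pos _).le)) ?_ ?_
  · intro n
    have g0 : (0 : ℝ) ≤ gg e0 (n 0) := by exact_mod_cast gg_nonneg h0 (n 0)
    have g1 : (0 : ℝ) ≤ gg e1 (n 1) := by exact_mod_cast gg_nonneg h1 (n 1)
    by_cases h : gg e0 (n 0) = 0 ∧ gg e1 (n 1) = 0
    · simp [nt, lt, h.1, h.2]
    · have hpos : 0 < (N : ℝ) * gg e0 (n 0) + gg e1 (n 1) := by
        rcases not_and_or.1 h with h | h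
        · have : (0 : ℝ) < gg e0 (n 0) := lt_of_le_of_ne g0 (by exact_mod_cast Ne.symm h)
          positivity
        · have : (0 : ℝ) < gg e1 (n 1) := lt_of_le_of_ne g1 (by exact_mod_cast Ne.symm h)
          positivity
      have hl : lt c e0 e1 n = 0 := if_neg h
      rw [hl, tendsto_zero_iff_norm_tendsto_zero]
      simp_rw [norm_nt]
      refine Real.tendsto_exp_atBot.comp ?_
      have hc : -(Real.pi / 2) * ((N : ℝ) * gg e0 (n 0) + gg e1 (n 1)) < 0 := by
        have := Real.pi_pos
        nlinarith [mul_pos this hpos]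
      refine (tendsto_id.const_mul_atTop_of_neg hc).congr (fun s => ?_)
      simp only [id]
      ring
  · filter_upwards [eventually_ge_atTop 1] with s hs n
    have g0 : (0 : ℝ) ≤ gg e0 (n 0) := by exact_mod_cast gg_nonneg h0 (n 0)
    have g1 : (0 : ℝ) ≤ gg e1 (n 1) := by exact_mod_cast gg_nonneg h1 (n 1)
    rw [norm_nt, ← Real.exp_add]
    refine Real.exp_le_exp.2 ?_
    have : (1:ℝ) ≤ N * s := by nlinarith
    have a0 : (gg e0 (n 0) : ℝ) ≤ N * s * gg e0 (n 0) := le_mul_of_one_le_left g0 this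
    have a1 : (gg e1 (n 1) : ℝ) ≤ s * gg e1 (n 1) := le_mul_of_one_le_left g1 hs
    have := Real.pi_pos
    nlinarith

lemma gg0 (n : ℤ) : gg 0 n = 0 ↔ n = 0 := by
  simp [gg]

lemma gg1 (n : ℤ) : gg 1 n = 0 ↔ n = 0 ∨ n = -1 := by
  have : gg 1 n = 4 * (n * (n + 1)) := by unfold gg; ring
  rw [this]
  simp only [mul_eq_zero]
  omega

lemma fin2_eq (n : Fin 2 → ℤ) (a b : ℤ) : n = ![a, b] ↔ n 0 = a ∧ n 1 = b := by
  simp [funext_iff, Fin.forall_fin_two]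

lemma lim00 (c : ℝ) : ∑' n, lt c 0 0 n = 1 := by
  rw [tsum_eq_sum (s := {![0, 0]})]
  · simp [lt, gg0]
  · intro n hn
    refine if_neg ?_
    simpa [fin2_eq, gg0] using hn

lemma lim01 (c : ℝ) : ∑' n, lt c 0 1 n = 2 := by
  rw [tsum_eq_sum (s := {![0, 0], ![0, -1]})]
  · rw [Finset.sum_pair (by simp [fin2_eq])]
    simp [lt, gg0, gg1]
    norm_num
  · intro n hn
    refine if_neg ?_
    simp only [Finset.mem_insert, Finset.mem_singleton, fin2_eq, gg0, gg1] at hn ⊢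
    tauto

lemma lim10 (c : ℝ) : ∑' n, lt c 1 0 n = 2 := by
  rw [tsum_eq_sum (s := {![0, 0], ![-1, 0]})]
  · rw [Finset.sum_pair (by simp [fin2_eq])]
    simp [lt, gg0, gg1]
    norm_num
  · intro n hn
    refine if_neg ?_
    simp only [Finset.mem_insert, Finset.mem_singleton, fin2_eq, gg0, gg1] at hn ⊢
    tauto

lemma lim11 (c : ℝ) : ∑' n, lt c 1 1 n = ((4 * Real.cos (Real.pi * c) : ℝ) : ℂ) := by
  rw [tsum_eq_sum (s := {![0, 0], ![0, -1], ![-1, 0], ![-1, -1]})]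
  · rw [Finset.sum_insert (by simp [fin2_eq]), Finset.sum_insert (by simp [fin2_eq]),
      Finset.sum_pair (by simp [fin2_eq])]
    have e1 : Complex.exp (Real.pi * Complex.I * c) = Complex.exp (Real.pi * c * Complex.I) := by
      congr 1; ring
    have e2 : Complex.exp (-(Real.pi * Complex.I * c)) = Complex.exp (-(Real.pi * c) * Complex.I) := by
      congr 1; ring
    have h3 : (-2 + 1 : ℂ) = -1 := by norm_num
    push_cast
    rw [Complex.cos]
    simp [lt, gg1, h3, e1, e2]
    ring
  · intro n hn
    refine if_neg ?_
    simp only [Finset.mem_insert, Finset.mem_singleton, fin2_eq, gg1] at hn ⊢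
    tauto

/-- The small parameter. -/
noncomputable def ep (s : ℝ) : ℂ := ((Real.exp (-(Real.pi / 2) * s) : ℝ) : ℂ)

open Filter Topology in
lemma ep_tendsto : Tendsto ep atTop (𝓝 0) := by
  have h : Tendsto (fun s : ℝ => Real.exp (-(Real.pi / 2) * s)) atTop (𝓝 0) := by
    refine Real.tendsto_exp_atBot.comp ?_
    exact tendsto_id.const_mul_atTop_of_neg (by have := Real.pi_pos; linarith)
  have := (Complex.continuous_ofReal.tendsto 0).comp h
  rw [Complex.ofReal_zero] at this
  exact this

lemma ep_ne (s : ℝ) : ep s ≠ 0 := by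
  unfold ep
  exact_mod_cast (Real.exp_pos _).ne'

/-- Normalised vector. -/
noncomputable def AA (N : ℕ) (s c : ℝ) : Fin 4 → ℂ :=
  ![nT (N * s) s c 0 0, nT (N * s) s c 0 1, nT (N * s) s c 1 0, nT (N * s) s c 1 1]

/-- Weights of the four second-order theta constants. -/
def wt (N : ℕ) : Fin 4 → ℕ := ![0, 1, N, N + 1]

/-- Limit vector. -/
noncomputable def ll (z : ℂ) : Fin 4 → ℂ := ![1, 2, 2, z]

lemma XX_eq (N : ℕ) (s c : ℝ) (i : Fin 4) :
    XX (N * s) s c i = ep s ^ (wt N i) * AA N s c i := by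
  have hp : ∀ k : ℕ, ep s ^ k = ((Real.exp (-(Real.pi / 2) * (k * s)) : ℝ) : ℂ) := by
    intro k
    rw [ep, ← Complex.ofReal_pow, ← Real.exp_nat_mul]
    congr 2
    ring
  rw [hp]
  fin_cases i <;> simp only [XX, AA, wt] <;> refine (Th_eq _ _ _ _ _).trans ?_ <;> congr 3 <;>
    push_cast <;> simp
  ring

open Filter Topology in
lemma AA_tendsto {N : ℕ} (hN : 1 ≤ N) (c : ℝ) (i : Fin 4) :
    Tendsto (fun s => AA N s c i) atTop (𝓝 (ll ((4 * Real.cos (Real.pi * c) : ℝ) : ℂ) i)) := by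
  fin_cases i
  · have h := nT_tendsto c hN (e0 := 0) (e1 := 0) (by simp) (by simp)
    rwa [lim00] at h
  · have h := nT_tendsto c hN (e0 := 0) (e1 := 1) (by simp) (by simp)
    rwa [lim01] at h
  · have h := nT_tendsto c hN (e0 := 1) (e1 := 0) (by simp) (by simp)
    rwa [lim10] at h
  · have h := nT_tendsto c hN (e0 := 1) (e1 := 1) (by simp) (by simp)
    rwa [lim11] at h

/-- Total weight of a monomial. -/
def ew (N : ℕ) (m : Fin 4 →₀ ℕ) : ℕ := ∑ i, wt N i * m i

open Filter Topology in
lemma limit_rel {G : MvPolynomial (Fin 4) ℂ} {N : ℕ} (hN : 1 ≤ N)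
    (h : ∀ y1 y2 c : ℝ, 0 < y1 → 0 < y2 → MvPolynomial.eval (XX y1 y2 c) G = 0)
    (e0 : ℕ) (he : ∀ m ∈ G.support, e0 ≤ ew N m) (c : ℝ) :
    ∑ m ∈ G.support, G.coeff m * ((if ew N m = e0 then 1 else 0) *
      ∏ i, ll ((4 * Real.cos (Real.pi * c) : ℝ) : ℂ) i ^ m i) = 0 := by
  have hN' : (1 : ℝ) ≤ N := by exact_mod_cast hN
  have hz : ∀ s : ℝ, 0 < s → ∑ m ∈ G.support, G.coeff m * (ep s ^ (ew N m - e0) *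
      ∏ i, AA N s c i ^ m i) = 0 := by
    intro s hs
    have h1 := h (N * s) s c (by positivity) hs
    rw [MvPolynomial.eval_eq'] at h1
    have h2 : ep s ^ e0 * ∑ m ∈ G.support, G.coeff m * (ep s ^ (ew N m - e0) *
      ∏ i, AA N s c i ^ m i) = 0 := by
      rw [← h1, Finset.mul_sum]
      refine Finset.sum_congr rfl (fun m hm => ?_)
      simp_rw [XX_eq, mul_pow, Finset.prod_mul_distrib, ← pow_mul]
      rw [Finset.prod_pow_eq_pow_sum, ← ew]
      have : ep s ^ ew N m = ep s ^ e0 * ep s ^ (ew N m - e0) := by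
        rw [← pow_add, Nat.add_sub_cancel' (he m hm)]
      rw [this]
      ring
    exact (mul_eq_zero.1 h2).resolve_left (pow_ne_zero _ (ep_ne s))
  have ht : Tendsto (fun s => ∑ m ∈ G.support, G.coeff m * (ep s ^ (ew N m - e0) *
      ∏ i, AA N s c i ^ m i)) atTop (𝓝 (∑ m ∈ G.support, G.coeff m * ((if ew N m = e0 then 1 else 0) *
      ∏ i, ll ((4 * Real.cos (Real.pi * c) : ℝ) : ℂ) i ^ m i))) := by
    refine tendsto_finsetSum _ (fun m hm => ?_)
    refine Tendsto.const_mul _ (Tendsto.mul ?_ ?_)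
    · have := ep_tendsto.pow (ew N m - e0)
      convert this using 2
      split_ifs with hh
      · simp [hh]
      · have := he m hm
        rw [zero_pow (by omega)]
    · exact tendsto_finsetProd _ (fun i _ => (AA_tendsto hN c i).pow _)
  refine tendsto_nhds_unique ht ?_
  refine tendsto_const_nhds.congr' ?_
  filter_upwards [eventually_gt_atTop 0] with s hs
  exact (hz s hs).symm

lemma ew_inj {k : ℕ} {m m' : Fin 4 →₀ ℕ} (hm : ∑ i, m i = k) (hm' : ∑ i, m' i = k)
    (h3 : m 3 = m' 3) (he : ew (k + 1) m = ew (k + 1) m') : m = m' := by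
  simp only [ew, wt, Fin.sum_univ_four] at hm hm' he
  simp at he
  have e : (m 1 + m 3) + (k + 1) * (m 2 + m 3) = (m' 1 + m' 3) + (k + 1) * (m' 2 + m' 3) := by
    linarith
  have e1 : m 1 + m 3 = m' 1 + m' 3 := by
    have := congrArg (· % (k + 1)) e
    simpa [Nat.add_mul_mod_self_left, Nat.mod_eq_of_lt (show m 1 + m 3 < k + 1 by omega),
      Nat.mod_eq_of_lt (show m' 1 + m' 3 < k + 1 by omega)] using this
  have e2 : m 2 + m 3 = m' 2 + m' 3 := by
    rw [e1] at e
    exact Nat.eq_of_mul_eq_mul_left (Nat.succ_pos k) (Nat.add_left_cancel e)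
  ext i
  fin_cases i
  · show m 0 = m' 0
    omega
  · show m 1 = m' 1
    omega
  · show m 2 = m' 2
    omega
  · exact h3

lemma dense {G : MvPolynomial (Fin 4) ℂ} {k : ℕ} (hG : G.IsHomogeneous k)
    (h : ∀ y1 y2 c : ℝ, 0 < y1 → 0 < y2 → MvPolynomial.eval (XX y1 y2 c) G = 0) : G = 0 := by
  by_contra hne
  have hsupp : G.support.Nonempty := by
    rwa [Finset.nonempty_iff_ne_empty, Ne, MvPolynomial.support_eq_empty]
  have hdeg : ∀ m ∈ G.support, ∑ i, m i = k := by
    intro m hm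
    have := hG (MvPolynomial.mem_support_iff.1 hm)
    rw [← this, Finsupp.weight_apply, Finsupp.sum_fintype] <;> simp
  obtain ⟨m0, hm0, hmin⟩ := Finset.exists_min_image G.support (ew (k + 1)) hsupp
  have hl := limit_rel (Nat.le_add_left 1 k) h (ew (k + 1) m0) hmin
  let a : (Fin 4 →₀ ℕ) → ℂ := fun m =>
    G.coeff m * ((if ew (k + 1) m = ew (k + 1) m0 then 1 else 0) * 2 ^ m 1 * 2 ^ m 2)
  let p : Polynomial ℂ := ∑ m ∈ G.support, Polynomial.monomial (m 3) (a m)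
  have hp : p = 0 := by
    refine Polynomial.eq_zero_of_infinite_isRoot p ?_
    refine Set.infinite_of_injective_forall_mem (f := fun j : ℕ => (((1 / ((j : ℝ) + 1) : ℝ)) : ℂ)) ?_ ?_
    · intro i j hij
      have h1 : (1 / ((i : ℝ) + 1) : ℝ) = 1 / ((j : ℝ) + 1) := Complex.ofReal_injective hij
      have hi : ((i : ℝ) + 1) ≠ 0 := by positivity
      have hj : ((j : ℝ) + 1) ≠ 0 := by positivity
      field_simp at h1
      exact_mod_cast (by linarith : (i : ℝ) = j)
    · intro j
      have hz0 : 0 < 1 / ((j : ℝ) + 1) := by positivity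
      have hz1 : 1 / ((j : ℝ) + 1) ≤ 1 := by
        rw [div_le_one (by positivity)]
        have : (0 : ℝ) ≤ j := Nat.cast_nonneg j
        linarith
      set z : ℝ := 1 / ((j : ℝ) + 1)
      have hc := hl (Real.arccos (z / 4) / Real.pi)
      rw [mul_div_cancel₀ _ Real.pi_ne_zero, Real.cos_arccos (by linarith) (by linarith),
        mul_div_cancel₀ _ (by norm_num : (4 : ℝ) ≠ 0)] at hc
      show Polynomial.eval (z : ℂ) p = 0
      rw [← hc, Polynomial.eval_finsetSum]
      refine Finset.sum_congr rfl (fun m _ => ?_)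
      rw [Polynomial.eval_monomial, Fin.prod_univ_four]
      simp [ll, a]
      ring_nf
  have hcoef : p.coeff (m0 3) = a m0 := by
    simp only [p, Polynomial.finsetSum_coeff, Polynomial.coeff_monomial]
    rw [Finset.sum_eq_single m0]
    · simp
    · intro m hm hmne
      split_ifs with h3
      · have : ew (k + 1) m ≠ ew (k + 1) m0 := fun he =>
          hmne (ew_inj (hdeg m hm) (hdeg m0 hm0) h3 he)
        simp [a, this]
      · rfl
    · exact fun hh => absurd hm0 hh
  rw [hp] at hcoef
  have : G.coeff m0 ≠ 0 := MvPolynomial.mem_support_iff.1 hm0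
  simp [a, this] at hcoef

lemma lin_indep : LinearIndependent ℂ (fun d : Fin 10 => fun τ : SiegelH2 => Dd d τ.1) := by
  rw [Fintype.linearIndependent_iff]
  intro g hg
  have hG : ∑ d, MvPolynomial.C (g d) * Dp d = 0 := by
    refine dense (k := 12) (MvPolynomial.IsHomogeneous.sum _ _ 12 (fun d _ => (Dp_hom d).C_mul _)) ?_
    intro y1 y2 c h1 h2
    have h := congrFun hg ⟨fam y1 y2 c, fam_mem c h1 h2⟩
    simp only [Finset.sum_apply, Pi.smul_apply, smul_eq_mul, Pi.zero_apply, Dd_eval c h1 h2] at h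
    simp only [map_sum, map_mul, MvPolynomial.eval_C]
    rw [← mul_right_inj' (by norm_num : (1 / 48 : ℂ) ≠ 0), mul_zero, ← h, Finset.mul_sum]
    exact Finset.sum_congr rfl (fun d _ => by ring)
  have hT : ∀ x : Fin 4 → ℂ, ∑ d, g d * ((MvPolynomial.eval x (Tp d)) ^ 2 *
      (∑ d', (MvPolynomial.eval x (Tp d')) ^ 4) - 4 * (MvPolynomial.eval x (Tp d)) ^ 6) = 0 := by
    intro x
    have h := congrArg (MvPolynomial.eval x) hG
    simpa only [map_sum, map_mul, map_sub, map_pow, MvPolynomial.eval_C, Dp, map_zero] using h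
  have key : ∀ (x : Fin 4 → ℂ) (t : Fin 10 → ℂ), (∀ d, MvPolynomial.eval x (Tp d) = t d) →
      ∑ d, g d * (t d ^ 2 * (∑ d', t d' ^ 4) - 4 * t d ^ 6) = 0 := by
    intro x t ht
    have h := hT x
    simpa only [ht] using h
  have ev : ∀ x0 x1 x2 x3 : ℂ, ∀ d, MvPolynomial.eval ![x0, x1, x2, x3] (Tp d) =
      ![x0 * x0 + x1 * x1 + x2 * x2 + x3 * x3, x0 * x0 - x1 * x1 + x2 * x2 - x3 * x3,
        x0 * x0 + x1 * x1 - x2 * x2 - x3 * x3, x0 * x0 - x1 * x1 - x2 * x2 + x3 * x3,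
        2 * (x0 * x1 + x2 * x3), 2 * (x0 * x1 - x2 * x3), 2 * (x0 * x2 + x1 * x3),
        2 * (x0 * x2 - x1 * x3), 2 * (x0 * x3 + x1 * x2), 2 * (x0 * x3 - x1 * x2)] d := by
    intro x0 x1 x2 x3 d
    fin_cases d <;> simp [Tp]
  have K := fun x0 x1 x2 x3 : ℂ => key _ _ (ev x0 x1 x2 x3)
  simp [Fin.sum_univ_succ] at K
  have h0 : (-1296) * g 0 + (176) * g 1 + (176) * g 2 + (176) * g 3 + (464) * g 4 + (464) * g 5 + (464) * g 6 + (464) * g 7 + (464) * g 8 + (464) * g 9 = 0 := by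
    have h := K (-1) (-1) (-1) (0)
    ring_nf at h
    linear_combination h
  have h1 : (-14400) * g 0 + (14400) * g 1 + (14400) * g 2 + (-14400) * g 3 + (14400) * g 8 + (14400) * g 9 = 0 := by
    have h := K (-1) (0) (0) (2)
    ring_nf at h
    linear_combination h
  have h2 : (-14400) * g 0 + (-14400) * g 1 + (14400) * g 2 + (14400) * g 3 + (14400) * g 6 + (14400) * g 7 = 0 := by
    have h := K (-1) (0) (2) (0)
    ring_nf at h
    linear_combination h
  have h3 : (-14400) * g 0 + (14400) * g 1 + (-14400) * g 2 + (14400) * g 3 + (14400) * g 4 + (14400) * g 5 = 0 := by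
    have h := K (-1) (2) (0) (0)
    ring_nf at h
    linear_combination h
  have h4 : (-82944) * g 0 + (29696) * g 1 + (11264) * g 2 + (29696) * g 3 + (11264) * g 4 + (11264) * g 5 + (29696) * g 6 + (29696) * g 7 + (29696) * g 8 + (29696) * g 9 = 0 := by
    have h := K (-1) (-1) (0) (2)
    ring_nf at h
    linear_combination h
  have h5 : (-82944) * g 0 + (11264) * g 1 + (29696) * g 2 + (29696) * g 3 + (29696) * g 4 + (29696) * g 5 + (11264) * g 6 + (11264) * g 7 + (29696) * g 8 + (29696) * g 9 = 0 := by
    have h := K (-1) (0) (-1) (2)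
    ring_nf at h
    linear_combination h
  have h6 : (-82944) * g 0 + (29696) * g 1 + (29696) * g 2 + (11264) * g 3 + (29696) * g 4 + (29696) * g 5 + (29696) * g 6 + (29696) * g 7 + (11264) * g 8 + (11264) * g 9 = 0 := by
    have h := K (-1) (0) (2) (-1)
    ring_nf at h
    linear_combination h
  have h7 : (-148176) * g 0 + (56304) * g 1 + (56304) * g 2 + (56304) * g 3 + (26064) * g 4 + (50256) * g 5 + (26064) * g 6 + (50256) * g 7 + (26064) * g 8 + (50256) * g 9 = 0 := by
    have h := K (-1) (-1) (-1) (2)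
    ring_nf at h
    linear_combination h
  have h8 : (-921600) * g 0 + (921600) * g 2 + (-921600) * g 4 + (921600) * g 5 + (921600) * g 6 + (921600) * g 8 = 0 := by
    have h := K (-1) (-1) (2) (2)
    ring_nf at h
    linear_combination h
  have h9 : (-921600) * g 0 + (921600) * g 1 + (921600) * g 4 + (-921600) * g 6 + (921600) * g 7 + (921600) * g 8 = 0 := by
    have h := K (-1) (2) (-1) (2)
    ring_nf at h
    linear_combination h
  intro d
  fin_cases d
  · show g 0 = 0
    linear_combination (23/172800)*h1 + (23/172800)*h2 + (23/172800)*h3 + (-1/36864)*h4 + (-1/36864)*h5 + (-1/36864)*h6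
  · show g 1 = 0
    linear_combination (-1/864)*h0 + (31/518400)*h1 + (19/518400)*h2 + (31/518400)*h3 + (1/331776)*h4 + (-5/331776)*h5 + (1/331776)*h6
  · show g 2 = 0
    linear_combination (-1/864)*h0 + (31/518400)*h1 + (31/518400)*h2 + (19/518400)*h3 + (-5/331776)*h4 + (1/331776)*h5 + (1/331776)*h6
  · show g 3 = 0
    linear_combination (-1/864)*h0 + (19/518400)*h1 + (31/518400)*h2 + (31/518400)*h3 + (1/331776)*h4 + (1/331776)*h5 + (-5/331776)*h6
  · show g 4 = 0
    linear_combination (-1/3456)*h0 + (89/1209600)*h1 + (89/1209600)*h2 + (89/1209600)*h3 + (-1/72576)*h4 + (5/1161216)*h5 + (5/1161216)*h6 + (-1/72576)*h7 + (-1/2764800)*h8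
  · show g 5 = 0
    linear_combination (5/3456)*h0 + (83/3628800)*h1 + (83/3628800)*h2 + (167/3628800)*h3 + (-5/145152)*h4 + (-19/1161216)*h5 + (-19/1161216)*h6 + (1/72576)*h7 + (1/2764800)*h8
  · show g 6 = 0
    linear_combination (-1/3456)*h0 + (89/1209600)*h1 + (89/1209600)*h2 + (89/1209600)*h3 + (5/1161216)*h4 + (-1/72576)*h5 + (5/1161216)*h6 + (-1/72576)*h7 + (-1/2764800)*h9
  · show g 7 = 0
    linear_combination (5/3456)*h0 + (83/3628800)*h1 + (167/3628800)*h2 + (83/3628800)*h3 + (-19/1161216)*h4 + (-5/145152)*h5 + (-19/1161216)*h6 + (1/72576)*h7 + (1/2764800)*h9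
  · show g 8 = 0
    linear_combination (-1/3456)*h0 + (61/1209600)*h1 + (61/1209600)*h2 + (61/1209600)*h3 + (5/1161216)*h4 + (5/1161216)*h5 + (-1/72576)*h6 + (-1/72576)*h7 + (1/2764800)*h8 + (1/2764800)*h9
  · show g 9 = 0
    linear_combination (5/3456)*h0 + (251/3628800)*h1 + (167/3628800)*h2 + (167/3628800)*h3 + (-19/1161216)*h4 + (-19/1161216)*h5 + (-5/145152)*h6 + (1/72576)*h7 + (-1/2764800)*h8 + (-1/2764800)*h9

/-- the ten functions `D_δ = ∂I₄/∂θ⁴[δ]` are linearly independent;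
equivalently their span has dimension exactly 10. -/
theorem statement7 :
    LinearIndependent ℂ (fun d : Fin 10 => fun τ : SiegelH2 => Dd d τ.1) ∧
    Module.finrank ℂ ↥(Submodule.span ℂ
      (Set.range fun d : Fin 10 => fun τ : SiegelH2 => Dd d τ.1)) = 10 := by
  refine ⟨lin_indep, ?_⟩
  rw [finrank_span_eq_card lin_indep, Fintype.card_fin]

end TwoLoop
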